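/- Let α be an irrational number of finite Diophantine type γ(α) < ∞ and let R_α : 𝕊¹ → 𝕊¹ be the rotation by α. Fix ℓ with 0 < ℓ < 1/(γ(α) + to1). Then there exists a constant C ≥ 0, depending only on α and ℓ, such that: for every δ > 0, every Borel measurable map T_δ : 𝕊¹ → 𝕊¹ with sup_{x ∈ 𝕊¹} d(R_α(x), T_δ(x)) ≤ δ, and every T_δ-invariant Borel probability measure μ_δ, one has W(m, μ_δ) ≤ C · δ^ℓ. -/

import Mathlib

/-! The Diophantine hypothesis says `‖kα‖_ℤ ≥ c k^{-γ}` for every `k ≥ 1`, where `γ` is any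
exponent larger than the type. By Dirichlet's theorem, for each `Q ≥ 1` there is a reduced fraction
`p/q` with `q ≤ Q` and `|α - p/q| ≤ 1/((Q+1)q)`; combined with the lower bound this forces
`1/q ≤ (c(Q+1))^{-1/γ}`, so `q` is neither too large nor too small.

For `n < q` the pseudo-orbit point `T^n x` is within `qδ` of `x + nα`, which is within `1/(Q+1)`
of `x + n p/q`. The latter points form a coset of the subgroup of order `q`, and summing a
`1`-Lipschitz function `g` over such a coset gives `q ∫ g dm` up to an error `1`
(`abs_sum_rational_orbit_sub_le`). Averaging `g` along `T`-orbits and integrating against the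
invariant measure yields `|∫ g dm - ∫ g dμ| ≤ qδ + 1/(Q+1) + 1/q` (`abs_integral_sub_le`).
Taking `Q = ⌊δ^{-γ/(γ+1)}⌋` makes every term `O(δ^{1/(γ+1)})`, and `γ` can be chosen so close to the
type that `ℓ ≤ 1/(γ+1)`. -/

open MeasureTheory Filter Topology

/-- `‖x‖_ℤ`: the distance from `x` to the nearest integer. -/
noncomputable def distInt (x : ℝ) : ℝ := |x - round x|

/-- The set of exponents `γ ≥ 0` with `liminf_{k→∞} k^γ ‖kα‖_ℤ = 0`. -/
noncomputable def dioSet (α : ℝ) : Set ℝ :=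
  {γ : ℝ | 0 ≤ γ ∧
    Filter.atTop.liminf
      (fun k : ℕ => ENNReal.ofReal ((k : ℝ) ^ γ * distInt (k * α))) = 0}

/-- The Diophantine type `γ(α) = sup { γ ≥ 0 : liminf_k k^γ ‖kα‖_ℤ = 0 }`. -/
noncomputable def dioType (α : ℝ) : ℝ := sSup (dioSet α)

/-- The Wasserstein–Monge–Kantorovich (bounded-Lipschitz) distance between two Borel
measures on the circle `ℝ/ℤ`. -/
noncomputable def W (μ ν : Measure (AddCircle (1:ℝ))) : ℝ :=
  ⨆ g : {g : AddCircle (1:ℝ) → ℝ // LipschitzWith 1 g ∧ ∀ x, |g x| ≤ 1},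
    |(∫ x, g.1 x ∂μ) - ∫ x, g.1 x ∂ν|

/-! ### Sums over orbits of rational rotations -/

lemma norm_circle_coe_le (x : ℝ) : ‖(x : AddCircle (1:ℝ))‖ ≤ |x| := by
  rw [AddCircle.norm_eq]
  simpa using round_le x 0

lemma circle_coe_int (z : ℤ) : ((z : ℝ) : AddCircle (1:ℝ)) = 0 := by
  rw [AddCircle.coe_eq_zero_iff]
  exact ⟨z, by simp⟩

lemma volume_circle_prob : IsProbabilityMeasure (volume : Measure (AddCircle (1:ℝ))) :=
  ⟨by simp [AddCircle.measure_univ]⟩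

/-- Any two points of the circle are `1/q`-close after translating one of them by a multiple
of `1/q`. -/
lemma exists_zsmul_close (q : ℕ) (hq : 0 < q) (x y : AddCircle (1:ℝ)) :
    ∃ j : ℤ, dist (x + j • (((1 / (q:ℝ) : ℝ)) : AddCircle (1:ℝ))) y ≤ 1 / q := by
  induction x using QuotientAddGroup.induction_on with | H x => ?_
  induction y using QuotientAddGroup.induction_on with | H y => ?_
  have hq' : (0:ℝ) < q := by exact_mod_cast hq
  refine ⟨⌊(y - x) * q⌋, ?_⟩
  rw [dist_eq_norm]
  have h : ((x : AddCircle (1:ℝ)) + ⌊(y - x) * q⌋ • (((1 / (q:ℝ) : ℝ)) : AddCircle (1:ℝ)) - y)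
      = ((x + ⌊(y - x) * q⌋ * (1 / (q:ℝ)) - y : ℝ) : AddCircle (1:ℝ)) := by
    rw [AddCircle.coe_sub, AddCircle.coe_add, ← zsmul_eq_mul, AddCircle.coe_zsmul]
  refine (le_of_eq (congrArg norm h)).trans ((norm_circle_coe_le _).trans ?_)
  have h1 := Int.floor_le ((y - x) * q)
  have h2 := Int.lt_floor_add_one ((y - x) * q)
  have e : x + ⌊(y - x) * q⌋ * (1 / (q:ℝ)) - y = (⌊(y - x) * q⌋ - (y - x) * q) / q := by
    field_simp
    ring
  rw [e, abs_div, abs_of_pos hq']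
  gcongr
  rw [abs_le]
  constructor <;> linarith

/-- Sum of `g` along one period of the orbit of `x` under the rotation by the rational `r`. -/
noncomputable def orbitSum (g : AddCircle (1:ℝ) → ℝ) (r : ℚ) (x : AddCircle (1:ℝ)) : ℝ :=
  ∑ n ∈ Finset.range r.den, g (x + n • ((r : ℝ) : AddCircle (1:ℝ)))

lemma den_nsmul_coe (r : ℚ) : r.den • ((r : ℝ) : AddCircle (1:ℝ)) = 0 := by
  rw [← AddCircle.coe_nsmul, nsmul_eq_mul]
  have : (r.den : ℝ) * (r : ℝ) = (r.num : ℝ) := by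
    exact_mod_cast Rat.den_mul_eq_num r
  rw [this, circle_coe_int]

lemma orbitSum_periodic (g : AddCircle (1:ℝ) → ℝ) (r : ℚ) :
    Function.Periodic (orbitSum g r) ((r : ℝ) : AddCircle (1:ℝ)) := by
  intro x
  unfold orbitSum
  have h1 := Finset.sum_range_succ (fun n : ℕ => g (x + n • ((r : ℝ) : AddCircle (1:ℝ)))) r.den
  have h2 := Finset.sum_range_succ' (fun n : ℕ => g (x + n • ((r : ℝ) : AddCircle (1:ℝ)))) r.den
  simp only [den_nsmul_coe, zero_smul, add_zero] at h1 h2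
  have h3 : ∀ n : ℕ, x + ((r : ℝ) : AddCircle (1:ℝ)) + n • ((r : ℝ) : AddCircle (1:ℝ))
      = x + (n + 1) • ((r : ℝ) : AddCircle (1:ℝ)) := by
    intro n
    rw [succ_nsmul]
    abel
  simp only [h3]
  linarith

/-- Since `r` is in lowest terms, `1/r.den` is a multiple of `r` modulo `1`. -/
lemma orbitSum_periodic_inv (g : AddCircle (1:ℝ) → ℝ) (r : ℚ) :
    Function.Periodic (orbitSum g r) ((1 / (r.den : ℝ) : ℝ) : AddCircle (1:ℝ)) := by
  obtain ⟨a, b, hab⟩ := Rat.isCoprime_num_den r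
  have hd : (r.den : ℝ) ≠ 0 := by exact_mod_cast r.den_nz
  have hr : (r : ℝ) = r.num / r.den := Rat.cast_def r
  have hab' : (a : ℝ) * r.num + b * r.den = 1 := by exact_mod_cast hab
  have key : ((1 / (r.den : ℝ) : ℝ) : AddCircle (1:ℝ)) = a • ((r : ℝ) : AddCircle (1:ℝ)) := by
    have : (1 / (r.den : ℝ)) = a * (r : ℝ) + (b : ℝ) := by
      rw [hr, ← hab']
      field_simp
    rw [this, AddCircle.coe_add, circle_coe_int, add_zero, ← zsmul_eq_mul, AddCircle.coe_zsmul]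
  rw [key]
  exact (orbitSum_periodic g r).zsmul a

/-- `orbitSum g r` oscillates by at most `1`: it is `r.den`-Lipschitz and `1/r.den`-periodic. -/
lemma abs_orbitSum_sub_le {g : AddCircle (1:ℝ) → ℝ} (hg : LipschitzWith 1 g) (r : ℚ)
    (x y : AddCircle (1:ℝ)) : |orbitSum g r x - orbitSum g r y| ≤ 1 := by
  obtain ⟨j, hj⟩ := exists_zsmul_close r.den r.den_pos x y
  have hd : (0 : ℝ) < r.den := by exact_mod_cast r.den_pos
  rw [← (orbitSum_periodic_inv g r).zsmul j x]
  set z := x + j • ((1 / (r.den : ℝ) : ℝ) : AddCircle (1:ℝ))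
  unfold orbitSum
  rw [← Finset.sum_sub_distrib]
  refine (Finset.abs_sum_le_sum_abs _ _).trans ?_
  have : ∀ n ∈ Finset.range r.den, |g (z + n • ((r : ℝ) : AddCircle (1:ℝ)))
      - g (y + n • ((r : ℝ) : AddCircle (1:ℝ)))| ≤ 1 / r.den := by
    intro n _
    have := hg.dist_le_mul (z + n • ((r : ℝ) : AddCircle (1:ℝ)))
      (y + n • ((r : ℝ) : AddCircle (1:ℝ)))
    rw [Real.dist_eq, dist_add_right, NNReal.coe_one, one_mul] at this
    exact this.trans hj
  refine (Finset.sum_le_sum this).trans ?_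
  rw [Finset.sum_const, Finset.card_range, nsmul_eq_mul]
  exact le_of_eq (by field_simp)

lemma integrable_of_lipschitz {g : AddCircle (1:ℝ) → ℝ} (hg : LipschitzWith 1 g)
    (μ : Measure (AddCircle (1:ℝ))) [IsFiniteMeasure μ] : Integrable g μ := by
  exact hg.continuous.integrable_of_hasCompactSupport
    (HasCompactSupport.of_compactSpace g)

lemma lipschitz_translate {g : AddCircle (1:ℝ) → ℝ} (hg : LipschitzWith 1 g)
    (a : AddCircle (1:ℝ)) : LipschitzWith 1 (fun x => g (x + a)) := by
  refine LipschitzWith.of_dist_le_mul fun x y => ?_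
  simpa using hg.dist_le_mul (x + a) (y + a)

/-- The mean of `orbitSum g r` is `r.den * ∫ g` by translation invariance, so the bound on its
oscillation also bounds its distance to that mean. -/
lemma abs_sum_rational_orbit_sub_le {g : AddCircle (1:ℝ) → ℝ} (hg : LipschitzWith 1 g) (r : ℚ)
    (x : AddCircle (1:ℝ)) : |orbitSum g r x - r.den * ∫ y, g y| ≤ 1 := by
  have := volume_circle_prob
  have hI : ∫ y, orbitSum g r y = r.den * ∫ y, g y := by
    unfold orbitSum
    rw [integral_finsetSum _ fun n _ => integrable_of_lipschitz (lipschitz_translate hg _) _]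
    simp only [integral_add_right_eq_self]
    simp
  have hint : Integrable (orbitSum g r) volume :=
    integrable_finsetSum _ fun n _ => integrable_of_lipschitz (lipschitz_translate hg _) _
  have h := norm_integral_le_of_norm_le_const (μ := (volume : Measure (AddCircle (1:ℝ))))
    (f := fun y => orbitSum g r x - orbitSum g r y) (C := 1)
    (Eventually.of_forall fun y => abs_orbitSum_sub_le hg r x y)
  rw [integral_sub (integrable_const _) hint, hI] at h
  simpa using h

/-! ### Invariant measures of perturbed rotations -/

lemma dist_iterate_le {α δ : ℝ} {T : AddCircle (1:ℝ) → AddCircle (1:ℝ)}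
    (hT : ∀ x, dist (x + (α : AddCircle (1:ℝ))) (T x) ≤ δ) (n : ℕ) (x : AddCircle (1:ℝ)) :
    dist (T^[n] x) (x + n • (α : AddCircle (1:ℝ))) ≤ n * δ := by
  induction n with
  | zero => simp
  | succ n ih =>
    rw [Function.iterate_succ_apply', succ_nsmul, ← add_assoc]
    have h1 := hT (T^[n] x)
    rw [dist_comm] at h1
    have h2 : dist (T^[n] x + (α : AddCircle (1:ℝ)))
        (x + n • (α : AddCircle (1:ℝ)) + (α : AddCircle (1:ℝ))) ≤ n * δ := by
      rwa [dist_add_right]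
    have := dist_triangle (T (T^[n] x)) (T^[n] x + (α : AddCircle (1:ℝ)))
      (x + n • (α : AddCircle (1:ℝ)) + (α : AddCircle (1:ℝ)))
    push_cast
    linarith

/-- For a rational `r` close to `α`, the integrals of a `1`-Lipschitz function against Lebesgue
measure and a `T`-invariant measure differ by at most the drift of `T`-orbits from rational orbits
over `r.den` steps, plus the equidistribution error `1/r.den`. -/
lemma abs_integral_sub_le {α δ ε : ℝ} (hδ : 0 ≤ δ) {r : ℚ} (hr : |α - r| * r.den ≤ ε)
    {T : AddCircle (1:ℝ) → AddCircle (1:ℝ)} (hTm : Measurable T)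
    (hT : ∀ x, dist (x + (α : AddCircle (1:ℝ))) (T x) ≤ δ)
    (μ : Measure (AddCircle (1:ℝ))) [IsProbabilityMeasure μ] (hμ : Measure.map T μ = μ)
    {g : AddCircle (1:ℝ) → ℝ} (hg : LipschitzWith 1 g) :
    |(∫ x, g x) - ∫ x, g x ∂μ| ≤ r.den * δ + ε + 1 / r.den := by
  have hd : (0 : ℝ) < r.den := by exact_mod_cast r.den_pos
  have hmp : MeasurePreserving T μ μ := ⟨hTm, hμ⟩
  have hpt : ∀ x, |(∑ n ∈ Finset.range r.den, g (T^[n] x)) - r.den * ∫ y, g y|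
      ≤ r.den * (r.den * δ + ε) + 1 := by
    intro x
    have h1 := abs_sum_rational_orbit_sub_le hg r x
    have h2 : |(∑ n ∈ Finset.range r.den, g (T^[n] x)) - orbitSum g r x|
        ≤ r.den * (r.den * δ + ε) := by
      unfold orbitSum
      rw [← Finset.sum_sub_distrib]
      refine (Finset.abs_sum_le_sum_abs _ _).trans ?_
      refine (Finset.sum_le_card_nsmul _ _ (r.den * δ + ε) fun n hn => ?_).trans
        (le_of_eq (by rw [Finset.card_range, nsmul_eq_mul]))
      have hn' : (n : ℝ) ≤ r.den := by exact_mod_cast (Finset.mem_range.mp hn).le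
      have h3 := hg.dist_le_mul (T^[n] x) (x + n • ((r : ℝ) : AddCircle (1:ℝ)))
      rw [Real.dist_eq, NNReal.coe_one, one_mul] at h3
      have h4 := dist_iterate_le hT n x
      have h5 : dist (x + n • (α : AddCircle (1:ℝ))) (x + n • ((r : ℝ) : AddCircle (1:ℝ))) ≤ ε := by
        rw [dist_add_left, dist_eq_norm, ← smul_sub, ← AddCircle.coe_sub, ← AddCircle.coe_nsmul,
          nsmul_eq_mul]
        refine (norm_circle_coe_le _).trans ?_
        rw [abs_mul, abs_of_nonneg (Nat.cast_nonneg n)]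
        nlinarith [abs_nonneg (α - r)]
      have h6 := dist_triangle (T^[n] x) (x + n • (α : AddCircle (1:ℝ)))
        (x + n • ((r : ℝ) : AddCircle (1:ℝ)))
      nlinarith
    have := abs_sub_le (∑ n ∈ Finset.range r.den, g (T^[n] x)) (orbitSum g r x)
      (r.den * ∫ y, g y)
    linarith
  have hint : ∀ n : ℕ, Integrable (fun x => g (T^[n] x)) μ := fun n =>
    ((hmp.iterate n).integrable_comp (integrable_of_lipschitz hg μ).aestronglyMeasurable).mpr
      (integrable_of_lipschitz hg μ)
  have hI : ∀ n : ℕ, ∫ x, g (T^[n] x) ∂μ = ∫ x, g x ∂μ := by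
    intro n
    have h := (hmp.iterate n)
    rw [← integral_map h.measurable.aemeasurable
      hg.continuous.measurable.aestronglyMeasurable, h.map_eq]
  have h := norm_integral_le_of_norm_le_const (μ := μ)
    (f := fun x => (∑ n ∈ Finset.range r.den, g (T^[n] x)) - r.den * ∫ y, g y)
    (Eventually.of_forall hpt)
  rw [integral_sub (integrable_finsetSum _ fun n _ => hint n) (integrable_const _),
    integral_finsetSum _ fun n _ => hint n] at h
  simp only [hI, Finset.sum_const, Finset.card_range, nsmul_eq_mul, integral_const,
    probReal_univ, smul_eq_mul, one_mul, mul_one, Real.norm_eq_abs] at h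
  rw [← mul_sub, abs_mul, abs_of_pos hd] at h
  rw [abs_sub_comm]
  refine le_of_mul_le_mul_left (h.trans (le_of_eq ?_)) hd
  field_simp

/-! ### Diophantine approximation -/

lemma distInt_pos {α : ℝ} (hα : Irrational α) {k : ℕ} (hk : k ≠ 0) : 0 < distInt (k * α) := by
  unfold distInt
  rw [abs_pos, sub_ne_zero]
  exact (hα.natCast_mul hk).ne_int _

/-- The Diophantine lower bound, uniform in `k ≥ 1`: irrationality takes care of the finitely many
`k` not controlled by the `liminf`. -/
lemma exists_dio_lower_bound {α : ℝ} (hα : Irrational α) {γ : ℝ} (hγ : 0 ≤ γ)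
    (h : γ ∉ dioSet α) :
    ∃ c > (0:ℝ), ∀ k : ℕ, 1 ≤ k → c ≤ (k : ℝ) ^ γ * distInt (k * α) := by
  have hl : 0 < Filter.atTop.liminf
      (fun k : ℕ => ENNReal.ofReal ((k : ℝ) ^ γ * distInt (k * α))) :=
    pos_iff_ne_zero.mpr fun h0 => h ⟨hγ, h0⟩
  obtain ⟨ε, hε0, hε⟩ := exists_between hl
  have hev := eventually_lt_of_lt_liminf hε
  obtain ⟨N, hN⟩ := eventually_atTop.mp hev
  have hεtop : ε ≠ ⊤ := (hN N le_rfl).ne_top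
  have hpos : ∀ k : ℕ, 1 ≤ k → 0 < (k : ℝ) ^ γ * distInt (k * α) := fun k hk =>
    mul_pos (Real.rpow_pos_of_pos (by exact_mod_cast hk) _) (distInt_pos hα (by lia))
  obtain ⟨k₀, hk₀, hmin⟩ := Finset.exists_min_image (Finset.Icc 1 (N + 1))
    (fun k : ℕ => (k : ℝ) ^ γ * distInt (k * α)) ⟨1, by simp⟩
  refine ⟨min ε.toReal ((k₀ : ℝ) ^ γ * distInt (k₀ * α)),
    lt_min (ENNReal.toReal_pos hε0.ne' hεtop) (hpos k₀ (Finset.mem_Icc.mp hk₀).1), fun k hk => ?_⟩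
  by_cases hkN : k ≤ N
  · exact (min_le_right _ _).trans (hmin k (Finset.mem_Icc.mpr ⟨hk, by lia⟩))
  · refine (min_le_left _ _).trans ?_
    have := hN k (by lia)
    exact ENNReal.toReal_le_of_le_ofReal (hpos k hk).le this.le

/-- Dirichlet approximation with denominator at most `Q`, together with the lower bound on the
denominator that the Diophantine condition imposes. -/
lemma exists_rat_approx {α γ c : ℝ} (hγ : 0 < γ) (hc : 0 < c)
    (hlow : ∀ k : ℕ, 1 ≤ k → c ≤ (k : ℝ) ^ γ * distInt (k * α)) {Q : ℕ} (hQ : 0 < Q) :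
    ∃ r : ℚ, |α - r| * r.den ≤ 1 / ((Q:ℝ) + 1) ∧ r.den ≤ Q ∧
      1 / (r.den : ℝ) ≤ c ^ (-1 / γ) * ((Q:ℝ) + 1) ^ (-1 / γ) := by
  obtain ⟨r, hr, hrQ⟩ := Real.exists_rat_abs_sub_le_and_den_le α hQ
  have hd : (0 : ℝ) < r.den := by exact_mod_cast r.den_pos
  have hQ' : (0:ℝ) < (Q:ℝ) + 1 := by positivity
  have h1 : |α - r| * r.den ≤ 1 / ((Q:ℝ) + 1) := by
    refine (mul_le_mul_of_nonneg_right hr hd.le).trans (le_of_eq ?_)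
    field_simp
  refine ⟨r, h1, hrQ, ?_⟩
  have h2 : distInt (r.den * α) ≤ 1 / ((Q:ℝ) + 1) := by
    refine ((round_le _ r.num).trans (le_of_eq ?_)).trans h1
    have : (r.den : ℝ) * (r : ℝ) = (r.num : ℝ) := by exact_mod_cast Rat.den_mul_eq_num r
    rw [← this, ← mul_sub, abs_mul, abs_of_pos hd, mul_comm]
  have h3 : c * ((Q:ℝ) + 1) ≤ (r.den : ℝ) ^ γ := by
    have h4 := (hlow r.den r.den_pos).trans
      (mul_le_mul_of_nonneg_left h2 (Real.rpow_nonneg hd.le γ))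
    rwa [mul_one_div, le_div_iff₀ hQ'] at h4
  have h5 := Real.rpow_le_rpow_of_nonpos (by positivity) h3
    (show (-1 / γ) ≤ 0 from div_nonpos_of_nonpos_of_nonneg (by norm_num) hγ.le)
  rw [← Real.rpow_mul hd.le, mul_div_cancel₀ _ hγ.ne', Real.rpow_neg_one,
    Real.mul_rpow hc.le hQ'.le] at h5
  rwa [one_div]

/-- **Quantitative statistical stability of Diophantine rotations.**
If `α` is irrational of finite Diophantine type `γ(α)` and `0 < ℓ < 1/(γ(α)+1)`,
then there is `C ≥ 0`, depending only on `α` and `ℓ`, such that: for every `δ > 0`,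
every Borel measurable `T_δ` with `sup_x d(R_α x, T_δ x) ≤ δ`, and every
`T_δ`-invariant Borel probability measure `μ_δ`, we have `W(m, μ_δ) ≤ C δ^ℓ`. -/
theorem quantitative_statistical_stability_diophantine_rotation
    (α : ℝ) (hα : Irrational α) (hfin : BddAbove (dioSet α))
    (ℓ : ℝ) (hℓ0 : 0 < ℓ) (hℓ : ℓ < 1 / (dioType α + 1)) :
    ∃ C ≥ (0:ℝ), ∀ δ > (0:ℝ), ∀ T : AddCircle (1:ℝ) → AddCircle (1:ℝ),
      Measurable T → (∀ x, dist (x + (α : AddCircle (1:ℝ))) (T x) ≤ δ) →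
      ∀ μ : Measure (AddCircle (1:ℝ)), IsProbabilityMeasure μ →
        Measure.map T μ = μ →
        W volume μ ≤ C * δ ^ ℓ := by
  have := volume_circle_prob
  have hγ0 : 0 ≤ dioType α := Real.sSup_nonneg fun x hx => hx.1
  -- An exponent between `dioType α` and `1/ℓ - 1` exceeds the type and satisfies `ℓ (γ + 1) < 1`.
  obtain ⟨γ, hγ1, hγ2⟩ : ∃ γ, dioType α < γ ∧ γ < 1 / ℓ - 1 := by
    refine exists_between ?_
    have := (lt_div_comm₀ hℓ0 (by linarith)).mp hℓ
    linarith
  have hγ : 0 < γ := hγ0.trans_lt hγ1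
  have hexp : ℓ ≤ 1 / (γ + 1) := by
    rw [le_div_comm₀ hℓ0 (by linarith)]
    linarith
  obtain ⟨c, hc, hlow⟩ := exists_dio_lower_bound hα hγ.le
    (fun h => absurd (le_csSup hfin h) (not_le.mpr hγ1))
  refine ⟨2 + 2 * c ^ (-1 / γ), by positivity, ?_⟩
  intro δ hδ T hTm hT μ hμp hμ
  have : Nonempty {g : AddCircle (1:ℝ) → ℝ // LipschitzWith 1 g ∧ ∀ x, |g x| ≤ 1} :=
    ⟨⟨fun _ => 0, LipschitzWith.const' 0, by simp⟩⟩
  refine ciSup_le fun ⟨g, hg, hg1⟩ => ?_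
  have hcpos : 0 < c ^ (-1 / γ) := by positivity
  have hδℓ : 0 < δ ^ ℓ := by positivity
  dsimp only
  rcases le_or_gt 1 δ with h1 | h1
  -- For `δ ≥ 1` the trivial bound `2` suffices.
  · have hb : ∀ ν : Measure (AddCircle (1:ℝ)), IsProbabilityMeasure ν → |∫ x, g x ∂ν| ≤ 1 := by
      intro ν _
      have := norm_integral_le_of_norm_le_const (μ := ν) (f := g) (C := 1)
        (Eventually.of_forall hg1)
      simpa using this
    have hone : 1 ≤ δ ^ ℓ := Real.one_le_rpow h1 hℓ0.le
    have := abs_sub (∫ x, g x) (∫ x, g x ∂μ)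
    have e1 := hb volume inferInstance
    have e2 := hb μ inferInstance
    nlinarith
  -- `Q = ⌊M⌋` balances the drift `Qδ` against the equidistribution error `Q^(-1/γ)`.
  · set M : ℝ := δ ^ (-γ / (γ + 1)) with hM
    have hM0 : 0 < M := by positivity
    have hM1 : 1 ≤ M := Real.one_le_rpow_of_pos_of_le_one_of_nonpos hδ h1.le
      (div_nonpos_of_nonpos_of_nonneg (by linarith) (by linarith))
    have hQpos : 0 < ⌊M⌋₊ := Nat.floor_pos.mpr hM1
    obtain ⟨r, hr1, hr2, hr3⟩ := exists_rat_approx hγ hc hlow hQpos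
    have hd : (0 : ℝ) < r.den := by exact_mod_cast r.den_pos
    have hrM : (r.den : ℝ) ≤ M :=
      (Nat.cast_le.mpr hr2).trans (Nat.floor_le hM0.le)
    have hmain := abs_integral_sub_le hδ.le hr1 hTm hT μ hμ hg
    have hA : (r.den : ℝ) * δ ≤ δ ^ (1 / (γ + 1)) := by
      refine (mul_le_mul_of_nonneg_right hrM hδ.le).trans (le_of_eq ?_)
      rw [hM]
      nth_rewrite 2 [← Real.rpow_one δ]
      rw [← Real.rpow_add hδ]
      congr 1
      field_simp
      ring
    have hB : 1 / ((⌊M⌋₊ : ℝ) + 1) ≤ 1 / r.den := by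
      have : (r.den : ℝ) ≤ ⌊M⌋₊ := by exact_mod_cast hr2
      exact one_div_le_one_div_of_le hd (by linarith)
    have hC : ((⌊M⌋₊ : ℝ) + 1) ^ (-1 / γ) ≤ δ ^ (1 / (γ + 1)) := by
      refine (Real.rpow_le_rpow_of_nonpos hM0 (Nat.lt_floor_add_one M).le
        (div_nonpos_of_nonpos_of_nonneg (by norm_num) hγ.le)).trans (le_of_eq ?_)
      rw [hM, ← Real.rpow_mul hδ.le]
      congr 1
      field_simp
    have hD : δ ^ (1 / (γ + 1)) ≤ δ ^ ℓ := Real.rpow_le_rpow_of_exponent_ge hδ h1.le hexp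
    nlinarith [mul_le_mul_of_nonneg_left (hC.trans hD) hcpos.le]
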